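/- Let f : ℝ² → ℝ² be a C^∞ map with f(0)=0 of the form f = (x, xy + y⁷ + Σ_{i+j≥8} a_{ij} x^i y^j). Then a_{09} − (7/12)a_{08}² ≠ 0 if and only if there exist ε ∈ {1,−1} and α, β ∈ ℝ such that j¹¹f(0) is A¹¹-equivalent to the 11-jet at 0 of (x,y) ↦ (x, xy + y⁷ + εy⁹ + αy¹⁰ + βy¹¹). -/

import Mathlib

open Filter Topology

noncomputable section

/-- Directional derivative of a scalar function. -/
def dop (v : ℝ × ℝ) (g : ℝ × ℝ → ℝ) : ℝ × ℝ → ℝ :=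
  fun p => fderiv ℝ g p v

/-- Partial derivative operator in the first coordinate. -/
def pdx : (ℝ × ℝ → ℝ) → ℝ × ℝ → ℝ := dop (1, 0)

/-- Partial derivative operator in the second coordinate. -/
def pdy : (ℝ × ℝ → ℝ) → ℝ × ℝ → ℝ := dop (0, 1)

/-- Taylor coefficient `a_{ij} = ∂_x^i ∂_y^j g(0,0) / (i! j!)` of `g` at the origin. -/
def tcoeff (g : ℝ × ℝ → ℝ) (i j : ℕ) : ℝ :=
  (pdx^[i] (pdy^[j] g)) 0 / (Nat.factorial i * Nat.factorial j)

/-- The Jacobian determinant `λ_f` of a map `f : ℝ² → ℝ²`. -/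
def jacDet (f : ℝ × ℝ → ℝ × ℝ) (p : ℝ × ℝ) : ℝ :=
  (fderiv ℝ f p (1, 0)).1 * (fderiv ℝ f p (0, 1)).2 -
    (fderiv ℝ f p (1, 0)).2 * (fderiv ℝ f p (0, 1)).1

/-- `f` has corank one at `0` : the derivative of `f` at `0` has rank one. -/
def CorankOne (f : ℝ × ℝ → ℝ × ℝ) : Prop :=
  LinearMap.rank ((fderiv ℝ f 0).toLinearMap) = 1

/-- `η` is a null vector field for `f` near `0`. -/
def IsNullVF (f η : ℝ × ℝ → ℝ × ℝ) : Prop :=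
  η 0 ≠ 0 ∧ ∃ U ∈ 𝓝 (0 : ℝ × ℝ),
    ContDiffOn ℝ (⊤ : ℕ∞) η U ∧ ∀ p ∈ U, jacDet f p = 0 → fderiv ℝ f p (η p) = 0

/-- The derivative `(ηg)(p) = Dg(p)(η(p))` of `g` along the vector field `η`. -/
def etaD (η : ℝ × ℝ → ℝ × ℝ) (g : ℝ × ℝ → ℝ) : ℝ × ℝ → ℝ :=
  fun p => fderiv ℝ g p (η p)

/-- The iterated derivative `η^k g` along the vector field `η`. -/
def etaIter (η : ℝ × ℝ → ℝ × ℝ) : ℕ → (ℝ × ℝ → ℝ) → ℝ × ℝ → ℝ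
  | 0, g => g
  | k + 1, g => etaD η (etaIter η k g)

/-- The Hessian matrix of second partial derivatives of `g` at `0`. -/
def hess (g : ℝ × ℝ → ℝ) : Matrix (Fin 2) (Fin 2) ℝ :=
  !![pdx (pdx g) 0, pdx (pdy g) 0; pdy (pdx g) 0, pdy (pdy g) 0]

/-- `A^r`-equivalence of the `r`-jets at `0` of two map-germs `(ℝ²,0) → (ℝ²,0)`. -/
def JetEquiv (r : ℕ) (f g : ℝ × ℝ → ℝ × ℝ) : Prop :=
  ∃ φ ψ : ℝ × ℝ → ℝ × ℝ,
    ContDiff ℝ (⊤ : ℕ∞) φ ∧ ContDiff ℝ (⊤ : ℕ∞) ψ ∧ φ 0 = 0 ∧ ψ 0 = 0 ∧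
    Function.Bijective (⇑(fderiv ℝ φ 0)) ∧ Function.Bijective (⇑(fderiv ℝ ψ 0)) ∧
    ∀ i ≤ r, iteratedFDeriv ℝ i (ψ ∘ f ∘ φ) 0 = iteratedFDeriv ℝ i g 0

/-- `A`-equivalence of two map-germs `(ℝ²,0) → (ℝ²,0)`. -/
def AEquiv (f g : ℝ × ℝ → ℝ × ℝ) : Prop :=
  ∃ φ ψ : ℝ × ℝ → ℝ × ℝ,
    ContDiff ℝ (⊤ : ℕ∞) φ ∧ ContDiff ℝ (⊤ : ℕ∞) ψ ∧ φ 0 = 0 ∧ ψ 0 = 0 ∧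
    Function.Bijective (⇑(fderiv ℝ φ 0)) ∧ Function.Bijective (⇑(fderiv ℝ ψ 0)) ∧
    ∀ᶠ p in 𝓝 (0 : ℝ × ℝ), ψ (f (φ p)) = g p

/-- `f` has the form `(x, g(x,y))` where `g` is `C^∞` and the Taylor coefficients of `g`
of total degree `< N` at the origin are prescribed by `P`. -/
def HasForm (f : ℝ × ℝ → ℝ × ℝ) (g : ℝ × ℝ → ℝ) (N : ℕ) (P : ℕ → ℕ → ℝ) : Prop :=
  ContDiff ℝ (⊤ : ℕ∞) g ∧ (∀ p, f p = (p.1, g p)) ∧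
    ∀ i j, i + j < N → tcoeff g i j = P i j

/-!
Write the germ as `(x, x y + N)`. A shear of the source absorbs the terms of `N` divisible by `x`
and leaves an unfolding `(x, x y + k y)` of a function `k` of one variable. Tilting the target by
`(X, Y) ↦ (X + c Y, Y)` for a suitable `c` cancels the coefficient of `y ^ 8` in `k` and turns that
of `y ^ 9` into `A = a₀₉ - (7 / 12) a₀₈ ^ 2`; scaling the axes multiplies `A` by an arbitrary
nonzero square, so `A` can be normalized to `1` or `-1` if it does not vanish.

Conversely, an equivalence with a normal form is restricted to the curves `t ↦ (s t ^ 6, t)`.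
Both components of the normal form have order at least `6` there, so the target coordinate change
acts linearly up to order `12`. Letting `s` vary separates the coefficients of `t ^ 7`, `t ^ 8` and
`t ^ 9` enough to determine the relevant Taylor coefficients of the coordinate changes, and
`ε = a ^ 2 A` with `a ≠ 0` remains.
-/

open Asymptotics
open scoped ContDiff

/-- `F = O(‖p‖ ^ n)` at the origin. Jets of germs are compared in these terms: two smooth germs have
the same `r`-jet at `0` exactly when their difference vanishes to order `r + 1`. -/
def VanishesToOrder {E G : Type*} [NormedAddCommGroup E] [NormedAddCommGroup G] (n : ℕ)
    (F : E → G) : Prop :=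
  F =O[𝓝 0] fun p => ‖p‖ ^ n

namespace VanishesToOrder

section Algebra

variable {D E G H : Type*} [NormedAddCommGroup D] [NormedAddCommGroup E] [NormedAddCommGroup G]
  [NormedAddCommGroup H] {F F' : E → G} {m n : ℕ}

lemma mono (hF : VanishesToOrder n F) (hmn : m ≤ n) : VanishesToOrder m F := by
  refine hF.trans (IsBigO.of_bound 1 ?_)
  filter_upwards [Metric.closedBall_mem_nhds (0 : E) one_pos] with p hp
  simpa using pow_le_pow_of_le_one (norm_nonneg p) (mem_closedBall_zero_iff.1 hp) hmn

lemma zero : VanishesToOrder n fun _ : E => (0 : G) :=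
  isBigO_zero _ _

lemma add (hF : VanishesToOrder n F) (hF' : VanishesToOrder n F') :
    VanishesToOrder n fun p => F p + F' p :=
  IsBigO.add hF hF'

lemma sub (hF : VanishesToOrder n F) (hF' : VanishesToOrder n F') :
    VanishesToOrder n fun p => F p - F' p :=
  IsBigO.sub hF hF'

lemma sum {ι : Type*} {s : Finset ι} {F : ι → E → G} (h : ∀ i ∈ s, VanishesToOrder n (F i)) :
    VanishesToOrder n fun p => ∑ i ∈ s, F i p :=
  IsBigO.fun_sum h

lemma clm_apply [NormedSpace ℝ G] [NormedSpace ℝ H] (hF : VanishesToOrder n F) (L : G →L[ℝ] H) :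
    VanishesToOrder n fun p => L (F p) :=
  (L.isBigO_comp F _).trans hF

lemma const_mul {F : E → ℝ} (hF : VanishesToOrder n F) (c : ℝ) :
    VanishesToOrder n fun p => c * F p :=
  hF.const_mul_left c

lemma mul {F F' : E → ℝ} (hF : VanishesToOrder m F) (hF' : VanishesToOrder n F') :
    VanishesToOrder (m + n) fun p => F p * F' p := by
  simpa only [VanishesToOrder, pow_add] using IsBigO.mul hF hF'

lemma pow {F : E → ℝ} (hF : VanishesToOrder m F) (n : ℕ) :
    VanishesToOrder (m * n) fun p => F p ^ n := by
  simpa only [VanishesToOrder, pow_mul] using IsBigO.pow hF n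

lemma prodMk {F' : E → H} (hF : VanishesToOrder n F) (hF' : VanishesToOrder n F') :
    VanishesToOrder n fun p => (F p, F' p) :=
  hF.prod_left hF'

lemma fst {F : E → G × H} (hF : VanishesToOrder n F) : VanishesToOrder n fun p => (F p).1 :=
  isBigO_fst_prod'.trans hF

lemma snd {F : E → G × H} (hF : VanishesToOrder n F) : VanishesToOrder n fun p => (F p).2 :=
  isBigO_snd_prod'.trans hF

lemma tendsto_zero (hF : VanishesToOrder (n + 1) F) : Tendsto F (𝓝 0) (𝓝 0) :=
  hF.trans_tendsto ((continuous_norm.pow (n + 1)).tendsto' _ _ (by simp))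

lemma apply_zero (hF : VanishesToOrder (n + 1) F) : F 0 = 0 :=
  IsBigO.eq_zero_of_norm_pow (by simpa only [sub_zero, VanishesToOrder] using hF) n.succ_ne_zero

lemma comp {φ : D → E} (hF : VanishesToOrder m F) (hφ : VanishesToOrder (n + 1) φ) :
    VanishesToOrder ((n + 1) * m) fun p => F (φ p) := by
  simpa only [VanishesToOrder, pow_mul, Function.comp_def] using
    (hF.comp_tendsto hφ.tendsto_zero).trans (hφ.norm_left.pow m)

end Algebra

lemma of_continuous {E G : Type*} [NormedAddCommGroup E] [NormedAddCommGroup G] {F : E → G}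
    (hF : Continuous F) : VanishesToOrder 0 F := by
  simpa only [VanishesToOrder, pow_zero] using (hF.tendsto 0).isBigO_one ℝ

section Calculus

variable {D E G : Type*} [NormedAddCommGroup D] [NormedAddCommGroup E] [NormedSpace ℝ E]
  [NormedAddCommGroup G] [NormedSpace ℝ G] {F : E → G} {n : ℕ}

lemma of_clm (L : E →L[ℝ] G) : VanishesToOrder 1 L := by
  simpa only [VanishesToOrder, pow_one] using (L.isBigO_id (𝓝 0)).norm_right

lemma of_contDiff (hF : ContDiff ℝ ∞ F) (h0 : F 0 = 0) : VanishesToOrder 1 F := by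
  simpa only [VanishesToOrder, pow_one, h0, sub_zero] using
    ((hF.differentiable (by simp)) 0).isBigO_sub.norm_right

lemma comp_sub_comp (hF : Differentiable ℝ F) (hF' : VanishesToOrder n (fderiv ℝ F))
    {φ ψ : D → E} (hφ : VanishesToOrder 1 φ) (hψ : VanishesToOrder 1 ψ) {m : ℕ}
    (h : VanishesToOrder m fun p => φ p - ψ p) :
    VanishesToOrder (n + m) fun p => F (φ p) - F (ψ p) := by
  obtain ⟨C, hC0, hC⟩ := hF'.exists_pos
  obtain ⟨r, hr, hball⟩ := Metric.eventually_nhds_iff_ball.1 hC.bound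
  have hφψ : VanishesToOrder 1 fun p => (φ p, ψ p) := hφ.prodMk hψ
  have hmvt : (fun p => F (φ p) - F (ψ p)) =O[𝓝 0] fun p => ‖(φ p, ψ p)‖ ^ n * ‖φ p - ψ p‖ := by
    refine IsBigO.of_bound C ?_
    have hlt : ∀ᶠ p in 𝓝 (0 : D), ‖(φ p, ψ p)‖ < r :=
      hφψ.tendsto_zero.norm.eventually (gt_mem_nhds (by simpa using hr))
    filter_upwards [hlt] with p hp
    have hderiv : ∀ x ∈ Metric.closedBall (0 : E) ‖(φ p, ψ p)‖,
        ‖fderiv ℝ F x‖ ≤ C * ‖(φ p, ψ p)‖ ^ n := by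
      intro x hx
      rw [mem_closedBall_zero_iff] at hx
      refine (hball x (mem_ball_zero_iff.2 (hx.trans_lt hp))).trans ?_
      rw [norm_pow, norm_norm]
      gcongr
    have hle := (convex_closedBall (0 : E) ‖(φ p, ψ p)‖).norm_image_sub_le_of_norm_fderiv_le
      (fun x _ => hF x) hderiv (mem_closedBall_zero_iff.2 (norm_snd_le (φ p, ψ p)))
      (mem_closedBall_zero_iff.2 (norm_fst_le (φ p, ψ p)))
    simpa only [norm_mul, norm_pow, norm_norm, mul_assoc] using hle
  have hpow := hφψ.norm_left.pow n
  simp only [pow_one] at hpow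
  simpa only [VanishesToOrder, pow_add] using hmvt.trans (hpow.mul (IsBigO.norm_left h))

lemma of_fderiv (hF : Differentiable ℝ F) (h0 : F 0 = 0)
    (hF' : VanishesToOrder n (fderiv ℝ F)) : VanishesToOrder (n + 1) F := by
  have hid : VanishesToOrder 1 fun p : E => p :=
    of_clm (ContinuousLinearMap.id ℝ E)
  simpa only [h0, sub_zero] using
    comp_sub_comp hF hF' hid zero (by simpa only [sub_zero] using hid)

end Calculus

end VanishesToOrder

section Polynomials

open Polynomial

lemma X_pow_dvd_of_isBigO (P : ℝ[X]) (n : ℕ)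
    (h : (fun t => P.eval t) =O[𝓝[≠] 0] fun t => ‖t‖ ^ n) : X ^ n ∣ P := by
  induction n generalizing P with
  | zero => simp
  | succ n ih =>
    have hP0 : P.eval 0 = 0 :=
      tendsto_nhds_unique (P.continuous.continuousWithinAt.tendsto)
        (h.trans_tendsto (((continuous_norm.pow (n + 1)).tendsto' _ _ (by simp)).mono_left
          nhdsWithin_le_nhds))
    obtain ⟨Q, rfl⟩ := Polynomial.X_dvd_iff.2 ((Polynomial.coeff_zero_eq_eval_zero P).trans hP0)
    rw [pow_succ']
    refine mul_dvd_mul_left X (ih Q ?_)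
    obtain ⟨C, hC⟩ := h.bound
    refine IsBigO.of_bound C ?_
    filter_upwards [hC, self_mem_nhdsWithin] with t ht ht0
    have htpos : 0 < ‖t‖ := norm_pos_iff.2 ht0
    simp only [eval_mul, eval_X, norm_mul, pow_succ, norm_norm, norm_pow] at ht ⊢
    refine le_of_mul_le_mul_left ?_ htpos
    linarith

namespace VanishesToOrder

lemma coeff_eq_zero {P : ℝ[X]} {n k : ℕ} (h : VanishesToOrder n fun t => P.eval t) (hk : k < n) :
    P.coeff k = 0 :=
  X_pow_dvd_iff.1 (X_pow_dvd_of_isBigO P n (IsBigO.mono h nhdsWithin_le_nhds)) k hk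

lemma exists_polynomial_sub {F : ℝ → ℝ} (hF : ContDiff ℝ ∞ F) (n : ℕ) :
    ∃ P : ℝ[X], VanishesToOrder n fun t => F t - P.eval t := by
  refine ⟨∑ k ∈ Finset.range (n + 1), C ((k.factorial : ℝ)⁻¹ * iteratedDeriv k F 0) * X ^ k, ?_⟩
  have htaylor := (taylor_isLittleO_univ (x₀ := 0) (hF.of_le (by exact_mod_cast le_top) :
    ContDiff ℝ n F)).isBigO.norm_right
  refine htaylor.congr (fun t => ?_) (fun t => by simp)
  simp only [taylor_within_apply, eval_finsetSum, eval_mul, eval_C, eval_pow, eval_X,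
    iteratedDerivWithin_univ, sub_zero, smul_eq_mul]
  congr 1
  exact Finset.sum_congr rfl fun k _ => by ring

lemma exists_sub_const_mul_pow {F : ℝ → ℝ} (hF : ContDiff ℝ ∞ F) {n : ℕ}
    (h : VanishesToOrder n F) : ∃ c, VanishesToOrder (n + 1) fun t => F t - c * t ^ n := by
  obtain ⟨P, hP⟩ := exists_polynomial_sub hF (n + 1)
  have hPn : VanishesToOrder n fun t => P.eval t := by
    simpa only [sub_sub_cancel] using h.sub (hP.mono n.le_succ)
  obtain ⟨Q, rfl⟩ := X_pow_dvd_of_isBigO P n (IsBigO.mono hPn nhdsWithin_le_nhds)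
  refine ⟨Q.eval 0, ?_⟩
  have hid : VanishesToOrder n fun t : ℝ => t ^ n := by
    simpa only [one_mul, ContinuousLinearMap.id_apply] using
      (of_clm (ContinuousLinearMap.id ℝ ℝ)).pow n
  have hQ : VanishesToOrder 1 fun t => Q.eval t - Q.eval 0 :=
    of_contDiff ((Polynomial.contDiff_aeval Q ∞).sub contDiff_const) (sub_self _)
  convert hP.add (hid.mul hQ) using 2 with t
  simp only [eval_mul, eval_pow, eval_X]
  ring

end VanishesToOrder

end Polynomials

section Taylor

lemma contDiff_dop {F : ℝ × ℝ → ℝ} (hF : ContDiff ℝ ∞ F) (v : ℝ × ℝ) : ContDiff ℝ ∞ (dop v F) :=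
  (hF.fderiv_right (by simp)).clm_apply contDiff_const

lemma contDiff_dop_iterate {F : ℝ × ℝ → ℝ} (hF : ContDiff ℝ ∞ F) (v : ℝ × ℝ) (n : ℕ) :
    ContDiff ℝ ∞ ((dop v)^[n] F) := by
  induction n with
  | zero => exact hF
  | succ n ih => simpa only [Function.iterate_succ_apply'] using contDiff_dop ih v

lemma dop_comm {F : ℝ × ℝ → ℝ} (hF : ContDiff ℝ ∞ F) (v w : ℝ × ℝ) :
    dop v (dop w F) = dop w (dop v F) := by
  funext p
  have hsymm : IsSymmSndFDerivAt ℝ F p :=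
    hF.contDiffAt.isSymmSndFDerivAt (by simpa using WithTop.coe_le_coe.2 (le_top (a := (2 : ℕ∞))))
  have hd : DifferentiableAt ℝ (fderiv ℝ F) p :=
    (hF.fderiv_right (m := ∞) (by simp)).differentiable (by simp) p
  have hdop (a b : ℝ × ℝ) : dop a (dop b F) p = fderiv ℝ (fderiv ℝ F) p a b := by
    unfold dop
    simp [fderiv_clm_apply hd (differentiableAt_const b)]
  rw [hdop, hdop, hsymm v w]

lemma dop_iterate_comm {F : ℝ × ℝ → ℝ} (hF : ContDiff ℝ ∞ F) (v w : ℝ × ℝ) (n : ℕ) :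
    (dop w)^[n] (dop v F) = dop v ((dop w)^[n] F) := by
  induction n with
  | zero => rfl
  | succ n ih =>
    rw [Function.iterate_succ_apply', Function.iterate_succ_apply', ih,
      dop_comm (contDiff_dop_iterate hF w n)]

lemma dop_iterate_sub {F H : ℝ × ℝ → ℝ} (hF : ContDiff ℝ ∞ F) (hH : ContDiff ℝ ∞ H) (v : ℝ × ℝ)
    (n : ℕ) : (dop v)^[n] (fun p => F p - H p) = fun p => (dop v)^[n] F p - (dop v)^[n] H p := by
  induction n with
  | zero => rfl
  | succ n ih =>
    have hF' := (contDiff_dop_iterate hF v n).differentiable (by simp)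
    have hH' := (contDiff_dop_iterate hH v n).differentiable (by simp)
    simp only [Function.iterate_succ_apply', ih]
    funext p
    simp only [dop, fderiv_fun_sub (hF' p) (hH' p), sub_apply]

lemma tcoeff_sub {F H : ℝ × ℝ → ℝ} (hF : ContDiff ℝ ∞ F) (hH : ContDiff ℝ ∞ H) (i j : ℕ) :
    tcoeff (fun p => F p - H p) i j = tcoeff F i j - tcoeff H i j := by
  simp only [tcoeff, pdx, pdy, dop_iterate_sub hF hH, sub_div,
    dop_iterate_sub (contDiff_dop_iterate hF _ j) (contDiff_dop_iterate hH _ j)]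

section SeparatedVariables

variable {ι : Type*} {s : Finset ι} {u v : ι → ℝ → ℝ}

lemma contDiff_iteratedDeriv {f : ℝ → ℝ} (hf : ContDiff ℝ ∞ f) (n : ℕ) :
    ContDiff ℝ ∞ (iteratedDeriv n f) := by
  simpa only [iteratedDeriv_eq_iterate] using hf.iterate_deriv n

lemma hasFDerivAt_sum_mul (hu : ∀ k, ContDiff ℝ ∞ (u k)) (hv : ∀ k, ContDiff ℝ ∞ (v k))
    (p : ℝ × ℝ) :
    HasFDerivAt (fun p : ℝ × ℝ => ∑ k ∈ s, u k p.1 * v k p.2)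
      (∑ k ∈ s, (u k p.1 • deriv (v k) p.2 • ContinuousLinearMap.snd ℝ ℝ ℝ +
        v k p.2 • deriv (u k) p.1 • ContinuousLinearMap.fst ℝ ℝ ℝ)) p :=
  HasFDerivAt.fun_sum fun k _ =>
    (((hu k).differentiable (by simp) p.1).hasDerivAt.comp_hasFDerivAt p hasFDerivAt_fst).mul
      (((hv k).differentiable (by simp) p.2).hasDerivAt.comp_hasFDerivAt p hasFDerivAt_snd)

lemma pdx_iterate_sum_mul (hu : ∀ k, ContDiff ℝ ∞ (u k)) (hv : ∀ k, ContDiff ℝ ∞ (v k)) (n : ℕ) :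
    pdx^[n] (fun p => ∑ k ∈ s, u k p.1 * v k p.2) =
      fun p => ∑ k ∈ s, iteratedDeriv n (u k) p.1 * v k p.2 := by
  induction n with
  | zero => simp
  | succ n ih =>
    funext p
    have hp := hasFDerivAt_sum_mul (s := s) (fun k => contDiff_iteratedDeriv (hu k) n) hv p
    rw [Function.iterate_succ_apply', ih, pdx, dop, hp.fderiv]
    simp [iteratedDeriv_succ, mul_comm]

lemma pdy_iterate_sum_mul (hu : ∀ k, ContDiff ℝ ∞ (u k)) (hv : ∀ k, ContDiff ℝ ∞ (v k)) (n : ℕ) :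
    pdy^[n] (fun p => ∑ k ∈ s, u k p.1 * v k p.2) =
      fun p => ∑ k ∈ s, u k p.1 * iteratedDeriv n (v k) p.2 := by
  induction n with
  | zero => simp
  | succ n ih =>
    funext p
    have hp := hasFDerivAt_sum_mul (s := s) hu (fun k => contDiff_iteratedDeriv (hv k) n) p
    rw [Function.iterate_succ_apply', ih, pdy, dop, hp.fderiv]
    simp [iteratedDeriv_succ]

end SeparatedVariables

lemma tcoeff_sum_monomial (s : Finset (ℕ × ℕ)) (c : ℕ × ℕ → ℝ) (i j : ℕ) :
    tcoeff (fun p => ∑ k ∈ s, c k * (p.1 ^ k.1 * p.2 ^ k.2)) i j =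
      if (i, j) ∈ s then c (i, j) else 0 := by
  have hu (k : ℕ × ℕ) : ContDiff ℝ ∞ fun x : ℝ => c k * x ^ k.1 := by fun_prop
  have hv (k : ℕ × ℕ) : ContDiff ℝ ∞ fun y : ℝ => y ^ k.2 := by fun_prop
  have hterm (k : ℕ × ℕ) : iteratedDeriv i (fun x : ℝ => c k * x ^ k.1) 0 *
      iteratedDeriv j (fun y : ℝ => y ^ k.2) 0 =
        if (i, j) = k then c k * (i.factorial * j.factorial) else 0 := by
    rw [iteratedDeriv_const_mul_field, iteratedDeriv_fun_pow_zero, iteratedDeriv_fun_pow_zero]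
    rcases k with ⟨a, b⟩
    by_cases hi : i = a <;> by_cases hj : j = b <;> simp [hi, hj, mul_assoc]
  have hfac : (i.factorial * j.factorial : ℝ) ≠ 0 := by positivity
  simp_rw [tcoeff, ← mul_assoc]
  rw [pdy_iterate_sum_mul hu hv,
    pdx_iterate_sum_mul hu fun k => contDiff_iteratedDeriv (hv k) j]
  simp_rw [Prod.fst_zero, Prod.snd_zero, hterm, Finset.sum_ite_eq]
  split_ifs
  · exact mul_div_cancel_right₀ _ hfac
  · exact zero_div _

lemma fderiv_eq_pdx_add_pdy (F : ℝ × ℝ → ℝ) (p : ℝ × ℝ) :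
    fderiv ℝ F p = pdx F p • ContinuousLinearMap.fst ℝ ℝ ℝ +
      pdy F p • ContinuousLinearMap.snd ℝ ℝ ℝ := by
  ext <;> simp [pdx, pdy, dop]

lemma tcoeff_pdx {F : ℝ × ℝ → ℝ} (hF : ContDiff ℝ ∞ F) (i j : ℕ) :
    tcoeff (pdx F) i j = (i + 1) * tcoeff F (i + 1) j := by
  simp only [tcoeff, pdx, pdy, dop_iterate_comm hF, Function.iterate_succ_apply,
    Nat.factorial_succ, Nat.cast_mul, Nat.cast_succ]
  field_simp

lemma tcoeff_pdy (F : ℝ × ℝ → ℝ) (i j : ℕ) :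
    tcoeff (pdy F) i j = (j + 1) * tcoeff F i (j + 1) := by
  simp only [tcoeff, Function.iterate_succ_apply, Nat.factorial_succ, Nat.cast_mul, Nat.cast_succ]
  field_simp

lemma iteratedFDeriv_eq_zero_of_tcoeff {F : ℝ × ℝ → ℝ} (hF : ContDiff ℝ ∞ F) {k : ℕ}
    (h : ∀ i j, i + j ≤ k → tcoeff F i j = 0) : iteratedFDeriv ℝ k F 0 = 0 := by
  induction k generalizing F with
  | zero =>
    have h0 : F 0 = 0 := by simpa [tcoeff] using h 0 0 le_rfl
    ext
    simpa using h0
  | succ k ih =>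
    have hx : ContDiff ℝ ∞ (pdx F) := contDiff_dop hF _
    have hy : ContDiff ℝ ∞ (pdy F) := contDiff_dop hF _
    have hx0 : iteratedFDeriv ℝ k (pdx F) 0 = 0 :=
      ih hx fun i j hij => by rw [tcoeff_pdx hF, h _ _ (by omega), mul_zero]
    have hy0 : iteratedFDeriv ℝ k (pdy F) 0 = 0 :=
      ih hy fun i j hij => by rw [tcoeff_pdy, h _ _ (by omega), mul_zero]
    let toDual (L : ℝ × ℝ →L[ℝ] ℝ) := (ContinuousLinearMap.id ℝ ℝ).smulRight L
    have hfd : fderiv ℝ F = toDual (.fst ℝ ℝ ℝ) ∘ pdx F + toDual (.snd ℝ ℝ ℝ) ∘ pdy F := by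
      funext p
      simp [toDual, fderiv_eq_pdx_add_pdy F p]
    rw [← norm_eq_zero, ← norm_iteratedFDeriv_fderiv, hfd, iteratedFDeriv_add_apply,
      ContinuousLinearMap.iteratedFDeriv_comp_left _ hx.contDiffAt (mod_cast le_top),
      ContinuousLinearMap.iteratedFDeriv_comp_left _ hy.contDiffAt (mod_cast le_top), hx0, hy0]
    · rw [norm_eq_zero]
      exact ContinuousMultilinearMap.ext fun m => by simp
    · exact ((ContinuousLinearMap.contDiff _).comp hx).contDiffAt.of_le (mod_cast le_top)
    · exact ((ContinuousLinearMap.contDiff _).comp hy).contDiffAt.of_le (mod_cast le_top)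

namespace VanishesToOrder

lemma of_iteratedFDeriv.{u} {E G : Type u} [NormedAddCommGroup E] [NormedSpace ℝ E]
    [NormedAddCommGroup G] [NormedSpace ℝ G] {F : E → G} (hF : ContDiff ℝ ∞ F) {n : ℕ}
    (h : ∀ k < n, iteratedFDeriv ℝ k F 0 = 0) : VanishesToOrder n F := by
  induction n generalizing G with
  | zero => exact of_continuous hF.continuous
  | succ n ih =>
    refine of_fderiv (hF.differentiable (by simp)) ?_ (ih (hF.fderiv_right (by simp)) ?_)
    · simpa using congrArg (fun M => M 0) (h 0 n.succ_pos)
    · intro k hk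
      rw [← norm_eq_zero, norm_iteratedFDeriv_fderiv, h (k + 1) (by omega), norm_zero]

lemma of_tcoeff {F : ℝ × ℝ → ℝ} (hF : ContDiff ℝ ∞ F) {n : ℕ}
    (h : ∀ i j, i + j < n → tcoeff F i j = 0) : VanishesToOrder n F :=
  of_iteratedFDeriv hF fun _ hk =>
    iteratedFDeriv_eq_zero_of_tcoeff hF fun i j hij => h i j (by omega)

lemma fderiv_of_tcoeff {F : ℝ × ℝ → ℝ} (hF : ContDiff ℝ ∞ F) {n : ℕ}
    (h : ∀ i j, i + j < n + 1 → tcoeff F i j = 0) : VanishesToOrder n (fderiv ℝ F) :=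
  of_iteratedFDeriv (hF.fderiv_right (by simp)) fun k hk => by
    rw [← norm_eq_zero, norm_iteratedFDeriv_fderiv,
      iteratedFDeriv_eq_zero_of_tcoeff hF fun i j hij => h i j (by omega), norm_zero]

lemma sub_taylor {F : ℝ × ℝ → ℝ} (hF : ContDiff ℝ ∞ F) (n : ℕ) :
    VanishesToOrder n fun p => F p - ∑ k ∈ Finset.range n ×ˢ Finset.range n,
      tcoeff F k.1 k.2 * (p.1 ^ k.1 * p.2 ^ k.2) := by
  have hT : ContDiff ℝ ∞ fun p : ℝ × ℝ => ∑ k ∈ Finset.range n ×ˢ Finset.range n,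
      tcoeff F k.1 k.2 * (p.1 ^ k.1 * p.2 ^ k.2) := by fun_prop
  refine of_tcoeff (hF.sub hT) fun i j hij => ?_
  rw [tcoeff_sub hF hT, tcoeff_sum_monomial _ fun k => tcoeff F k.1 k.2, if_pos, sub_self]
  simp only [Finset.mem_product, Finset.mem_range]
  omega

open Polynomial in
lemma coeff_eq_zero_of_sum_monomial {n : ℕ} {s : Finset (ℕ × ℕ)} {c : ℕ × ℕ → ℝ}
    (h : VanishesToOrder n fun p : ℝ × ℝ => ∑ k ∈ s, c k * (p.1 ^ k.1 * p.2 ^ k.2))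
    {k : ℕ × ℕ} (hk : k ∈ s) (hkn : k.1 + k.2 < n) : c k = 0 := by
  have hline (a : ℝ) : ∑ l ∈ s with k.1 + k.2 = l.1 + l.2, c l * a ^ l.1 = 0 := by
    have hcurve : VanishesToOrder 1 fun t : ℝ => (a * t, t) :=
      of_contDiff (by fun_prop) (by simp)
    have hP : VanishesToOrder n fun t =>
        (∑ l ∈ s, C (c l * a ^ l.1) * X ^ (l.1 + l.2) : ℝ[X]).eval t := by
      convert h.comp hcurve using 2 with t
      · simp
      · simp only [eval_finsetSum, eval_mul, eval_C, eval_pow, eval_X]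
        exact Finset.sum_congr rfl fun l _ => by ring
    simpa only [finsetSum_coeff, coeff_C_mul_X_pow, Finset.sum_filter] using hP.coeff_eq_zero hkn
  have hQ : ∑ l ∈ s with k.1 + k.2 = l.1 + l.2, C (c l) * X ^ l.1 = (0 : ℝ[X]) :=
    Polynomial.funext fun a => by simpa [eval_finsetSum] using hline a
  have hcoeff := congrArg (coeff · k.1) hQ
  simp only [finsetSum_coeff, coeff_C_mul_X_pow, coeff_zero] at hcoeff
  rw [Finset.sum_eq_single k, if_pos rfl] at hcoeff
  · exact hcoeff
  · intro l hl hlk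
    rw [if_neg]
    intro h1
    exact hlk (Prod.ext h1.symm (by have := (Finset.mem_filter.1 hl).2; omega))
  · exact fun hk' => (hk' (Finset.mem_filter.2 ⟨hk, rfl⟩)).elim

lemma tcoeff_eq_zero {F : ℝ × ℝ → ℝ} (hF : ContDiff ℝ ∞ F) {n : ℕ} (h : VanishesToOrder n F)
    {i j : ℕ} (hij : i + j < n) : tcoeff F i j = 0 := by
  refine coeff_eq_zero_of_sum_monomial (n := n) (c := fun k => tcoeff F k.1 k.2) (k := (i, j))
    (s := Finset.range n ×ˢ Finset.range n) ?_
    (Finset.mk_mem_product (Finset.mem_range.2 (by omega)) (Finset.mem_range.2 (by omega))) hij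
  simpa only [sub_sub_cancel] using h.sub (sub_taylor hF n)

lemma iteratedFDeriv_eq_zero {F : ℝ × ℝ → ℝ × ℝ} (hF : ContDiff ℝ ∞ F) {n k : ℕ}
    (h : VanishesToOrder n F) (hk : k < n) : iteratedFDeriv ℝ k F 0 = 0 := by
  have h1 : iteratedFDeriv ℝ k (fun p => (F p).1) 0 = 0 :=
    iteratedFDeriv_eq_zero_of_tcoeff hF.fst fun i j hij =>
      h.fst.tcoeff_eq_zero hF.fst (hij.trans_lt hk)
  have h2 : iteratedFDeriv ℝ k (fun p => (F p).2) 0 = 0 :=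
    iteratedFDeriv_eq_zero_of_tcoeff hF.snd fun i j hij =>
      h.snd.tcoeff_eq_zero hF.snd (hij.trans_lt hk)
  change iteratedFDeriv ℝ k (fun p => ((F p).1, (F p).2)) 0 = 0
  rw [iteratedFDeriv_prodMk hF.fst.contDiffAt hF.snd.contDiffAt (mod_cast le_top), h1, h2]
  rfl

end VanishesToOrder

lemma vanishesToOrder_sub_iff {F H : ℝ × ℝ → ℝ × ℝ} (hF : ContDiff ℝ ∞ F) (hH : ContDiff ℝ ∞ H)
    (r : ℕ) : VanishesToOrder (r + 1) (fun p => F p - H p) ↔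
      ∀ i ≤ r, iteratedFDeriv ℝ i F 0 = iteratedFDeriv ℝ i H 0 := by
  have hsub (i : ℕ) : iteratedFDeriv ℝ i (fun p => F p - H p) 0 =
      iteratedFDeriv ℝ i F 0 - iteratedFDeriv ℝ i H 0 :=
    fun_iteratedFDeriv_sub_apply (hF.contDiffAt.of_le (mod_cast le_top))
      (hH.contDiffAt.of_le (mod_cast le_top))
  constructor
  · intro h i hi
    rw [← sub_eq_zero, ← hsub]
    exact h.iteratedFDeriv_eq_zero (hF.sub hH) (Nat.lt_succ_of_le hi)
  · intro h
    refine .of_iteratedFDeriv (hF.sub hH) fun i hi => ?_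
    rw [hsub, h i (Nat.le_of_lt_succ hi), sub_self]

end Taylor

section JetEquivalence

/-- A smooth change of coordinates at the origin of the plane, as are the maps `φ` and `ψ` of
`JetEquiv`. -/
structure IsCoordChange (φ : ℝ × ℝ → ℝ × ℝ) : Prop where
  contDiff : ContDiff ℝ ∞ φ
  apply_zero : φ 0 = 0
  bijective_fderiv : Function.Bijective (fderiv ℝ φ 0)

namespace IsCoordChange

variable {φ ψ : ℝ × ℝ → ℝ × ℝ}

lemma of_equiv (L : (ℝ × ℝ) ≃L[ℝ] ℝ × ℝ) : IsCoordChange L :=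
  ⟨L.contDiff, map_zero L, by rw [L.fderiv]; exact L.bijective⟩

lemma linear {a b c d : ℝ} (h : a * d - b * c ≠ 0) :
    IsCoordChange fun p => (a * p.1 + b * p.2, c * p.1 + d * p.2) := by
  let L : ℝ × ℝ →L[ℝ] ℝ × ℝ :=
    (a • ContinuousLinearMap.fst ℝ ℝ ℝ + b • ContinuousLinearMap.snd ℝ ℝ ℝ).prod
      (c • ContinuousLinearMap.fst ℝ ℝ ℝ + d • ContinuousLinearMap.snd ℝ ℝ ℝ)
  have hL : Function.Injective L.toLinearMap := by
    rw [← LinearMap.ker_eq_bot, LinearMap.ker_eq_bot']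
    rintro ⟨x, y⟩ hxy
    obtain ⟨h1, h2⟩ : a * x + b * y = 0 ∧ c * x + d * y = 0 := Prod.mk_eq_zero.1 hxy
    refine Prod.mk_eq_zero.2 ⟨(mul_eq_zero.1 ?_).resolve_left h, (mul_eq_zero.1 ?_).resolve_left h⟩
    · linear_combination d * h1 - b * h2
    · linear_combination a * h2 - c * h1
  exact of_equiv (LinearEquiv.ofInjectiveEndo _ hL).toContinuousLinearEquiv

lemma of_sub_id (hφ : ContDiff ℝ ∞ φ) (h : VanishesToOrder 2 fun p => φ p - p) :
    IsCoordChange φ := by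
  have h0 : φ 0 = 0 := by simpa only [sub_zero] using h.apply_zero
  have hderiv : HasFDerivAt φ (ContinuousLinearMap.id ℝ (ℝ × ℝ)) 0 := by
    rw [hasFDerivAt_iff_isLittleO_nhds_zero]
    simpa only [zero_add, h0, sub_zero, ContinuousLinearMap.id_apply] using
      h.trans_isLittleO (isLittleO_norm_pow_id one_lt_two)
  exact ⟨hφ, h0, by rw [hderiv.fderiv]; exact Function.bijective_id⟩

lemma comp (hφ : IsCoordChange φ) (hψ : IsCoordChange ψ) : IsCoordChange (φ ∘ ψ) := by
  refine ⟨hφ.contDiff.comp hψ.contDiff, by simp [hψ.apply_zero, hφ.apply_zero], ?_⟩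
  rw [fderiv_comp 0 (hφ.contDiff.differentiable (by simp) _)
    (hψ.contDiff.differentiable (by simp) _), hψ.apply_zero]
  exact hφ.bijective_fderiv.comp hψ.bijective_fderiv

lemma vanishesToOrder_one (hφ : IsCoordChange φ) : VanishesToOrder 1 φ :=
  .of_contDiff hφ.contDiff hφ.apply_zero

lemma exists_equiv (hφ : IsCoordChange φ) :
    ∃ L : (ℝ × ℝ) ≃L[ℝ] ℝ × ℝ, VanishesToOrder 2 fun p => φ p - L p := by
  have hsmooth : ContDiff ℝ ∞ fun p => φ p - fderiv ℝ φ 0 p :=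
    hφ.contDiff.sub (fderiv ℝ φ 0).contDiff
  have hderiv : fderiv ℝ (fun p => φ p - fderiv ℝ φ 0 p) 0 = 0 := by
    rw [fderiv_fun_sub (hφ.contDiff.differentiable (by simp) 0) (fderiv ℝ φ 0).differentiableAt,
      ContinuousLinearMap.fderiv, sub_self]
  have htwo : VanishesToOrder 2 fun p => φ p - fderiv ℝ φ 0 p :=
    .of_fderiv (hsmooth.differentiable (by simp)) (by simp [hφ.apply_zero])
      (.of_contDiff (hsmooth.fderiv_right (by simp)) hderiv)
  let L := LinearEquiv.ofBijective (fderiv ℝ φ 0).toLinearMap hφ.bijective_fderiv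
  exact ⟨L.toContinuousLinearEquiv, htwo⟩

lemma isBigO_rev (hφ : IsCoordChange φ) : (fun p => p) =O[𝓝 0] φ := by
  obtain ⟨L, hL⟩ := hφ.exists_equiv
  have hlittle : (fun p => φ p - L p) =o[𝓝 0] L :=
    (hL.trans_isLittleO (isLittleO_norm_pow_id one_lt_two)).trans_isBigO (L.isBigO_comp_rev _ _)
  simpa only [sub_add_cancel] using (L.isBigO_comp_rev _ _).trans hlittle.right_isBigO_add

/- Near the origin `φ` is comparable with its derivative up to quadratic terms, so an equation
`φ ∘ w ≡ v` between germs of order `m` can be solved linearly up to order `2 * m`. -/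
lemma exists_equiv_sub_comp (hφ : IsCoordChange φ) :
    ∃ L : (ℝ × ℝ) ≃L[ℝ] ℝ × ℝ, ∀ {E : Type*} [NormedAddCommGroup E] {w v : E → ℝ × ℝ} {m n : ℕ},
      VanishesToOrder 1 w → VanishesToOrder (m + 1) v → m + 1 ≤ n → n ≤ (m + 1) * 2 →
      VanishesToOrder n (fun p => φ (w p) - v p) → VanishesToOrder n fun p => w p - L (v p) := by
  obtain ⟨L, hL⟩ := hφ.exists_equiv
  refine ⟨L.symm, fun {E _ w v m n} hw hv hmn hnm h => ?_⟩
  have hφw : VanishesToOrder (m + 1) fun p => φ (w p) := by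
    simpa only [sub_add_cancel] using (h.mono hmn).add hv
  have hwm : VanishesToOrder (m + 1) w := (hφ.isBigO_rev.comp_tendsto hw.tendsto_zero).trans hφw
  have hLw : VanishesToOrder n fun p => L (w p) - v p := by
    simpa only [sub_sub_sub_cancel_left, sub_sub_sub_cancel_right, sub_sub_cancel] using
      h.sub ((hL.comp hwm).mono hnm)
  simpa only [map_sub, ContinuousLinearEquiv.coe_coe, ContinuousLinearEquiv.symm_apply_apply] using
    hLw.clm_apply (L.symm : ℝ × ℝ →L[ℝ] ℝ × ℝ)

end IsCoordChange

lemma VanishesToOrder.comp_sub_comp_of_contDiff {D E G : Type*} [NormedAddCommGroup D]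
    [NormedAddCommGroup E] [NormedSpace ℝ E] [NormedAddCommGroup G] [NormedSpace ℝ G] {ψ : E → G}
    (hψ : ContDiff ℝ ∞ ψ) {a b : D → E} (hb : ContinuousAt b 0) {n : ℕ}
    (h : VanishesToOrder (n + 1) fun p => a p - b p) :
    VanishesToOrder (n + 1) fun p => ψ (a p) - ψ (b p) := by
  have ha : Tendsto a (𝓝 0) (𝓝 (b 0)) := by
    simpa using h.tendsto_zero.add hb
  exact ((hψ.contDiffAt.hasStrictFDerivAt (by simp)).isBigO_sub.comp_tendsto
    (ha.prodMk_nhds hb)).trans h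

variable {r : ℕ} {f g h : ℝ × ℝ → ℝ × ℝ}

lemma jetEquiv_iff (hf : ContDiff ℝ ∞ f) (hg : ContDiff ℝ ∞ g) :
    JetEquiv r f g ↔ ∃ φ ψ, IsCoordChange φ ∧ IsCoordChange ψ ∧
      VanishesToOrder (r + 1) fun p => ψ (f (φ p)) - g p := by
  constructor
  · rintro ⟨φ, ψ, hφ, hψ, hφ0, hψ0, hφ', hψ', hjet⟩
    exact ⟨φ, ψ, ⟨hφ, hφ0, hφ'⟩, ⟨hψ, hψ0, hψ'⟩,
      (vanishesToOrder_sub_iff (hψ.comp (hf.comp hφ)) hg r).2 hjet⟩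
  · rintro ⟨φ, ψ, ⟨hφ, hφ0, hφ'⟩, ⟨hψ, hψ0, hψ'⟩, hjet⟩
    exact ⟨φ, ψ, hφ, hψ, hφ0, hψ0, hφ', hψ',
      (vanishesToOrder_sub_iff (hψ.comp (hf.comp hφ)) hg r).1 hjet⟩

lemma JetEquiv.trans (hf : ContDiff ℝ ∞ f) (hg : ContDiff ℝ ∞ g) (hh : ContDiff ℝ ∞ h)
    (hfg : JetEquiv r f g) (hgh : JetEquiv r g h) : JetEquiv r f h := by
  obtain ⟨φ₁, ψ₁, hφ₁, hψ₁, h₁⟩ := (jetEquiv_iff hf hg).1 hfg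
  obtain ⟨φ₂, ψ₂, hφ₂, hψ₂, h₂⟩ := (jetEquiv_iff hg hh).1 hgh
  refine (jetEquiv_iff hf hh).2 ⟨φ₁ ∘ φ₂, ψ₂ ∘ ψ₁, hφ₁.comp hφ₂, hψ₂.comp hψ₁, ?_⟩
  have h₁' : VanishesToOrder (r + 1) fun p => ψ₁ (f (φ₁ (φ₂ p))) - g (φ₂ p) := by
    simpa only [zero_add, one_mul] using h₁.comp hφ₂.vanishesToOrder_one
  have hcont : Continuous fun p => g (φ₂ p) := hg.continuous.comp hφ₂.contDiff.continuous
  simpa only [sub_add_sub_cancel, Function.comp_apply] using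
    (VanishesToOrder.comp_sub_comp_of_contDiff hψ₂.contDiff hcont.continuousAt h₁').add h₂

lemma jetEquiv_of_sub (hf : ContDiff ℝ ∞ f) (hg : ContDiff ℝ ∞ g)
    (h : VanishesToOrder (r + 1) fun p => f p - g p) : JetEquiv r f g :=
  (jetEquiv_iff hf hg).2 ⟨id, id, .of_equiv (.refl ℝ _), .of_equiv (.refl ℝ _), h⟩

end JetEquivalence

namespace VanishesToOrder

lemma fst_id : VanishesToOrder 1 fun p : ℝ × ℝ => p.1 := .of_clm (.fst ℝ ℝ ℝ)

lemma snd_id : VanishesToOrder 1 fun p : ℝ × ℝ => p.2 := .of_clm (.snd ℝ ℝ ℝ)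

lemma pow_mul_continuous {q : ℝ → ℝ} (hq : Continuous q) (n : ℕ) :
    VanishesToOrder n fun t => t ^ n * q t := by
  simpa using ((of_clm (ContinuousLinearMap.id ℝ ℝ)).pow n).mul (of_continuous hq)

lemma mul_continuous {E : Type*} [NormedAddCommGroup E] {F H : E → ℝ} {n : ℕ}
    (hF : VanishesToOrder n F) (hH : Continuous H) : VanishesToOrder n fun p => F p * H p :=
  hF.mul (of_continuous hH)

lemma pow_sub_expansion {v : ℝ → ℝ} (hv : ContDiff ℝ ∞ v) {a b c : ℝ}
    (h : VanishesToOrder 4 fun t => v t - (a * t + b * t ^ 2 + c * t ^ 3)) (n : ℕ) :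
    VanishesToOrder (n + 5) fun t => v t ^ (n + 2) - t ^ (n + 2) * (a ^ (n + 2) +
      (n + 2) * a ^ (n + 1) * b * t +
      ((n + 2) * a ^ (n + 1) * c + (n + 2) * (n + 1) / 2 * a ^ n * b ^ 2) * t ^ 2) := by
  have hv1 : VanishesToOrder 1 v := by
    have hlin : VanishesToOrder 1 fun t : ℝ => a * t + b * t ^ 2 + c * t ^ 3 :=
      of_contDiff (by fun_prop) (by simp)
    simpa only [sub_add_cancel] using (h.mono (by norm_num)).add hlin
  induction n with
  | zero =>
    have hsum : VanishesToOrder 1 fun t => v t + (a * t + b * t ^ 2 + c * t ^ 3) :=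
      of_contDiff (by fun_prop) (by simp [hv1.apply_zero])
    have hrest := pow_mul_continuous (q := fun t => 2 * b * c + c ^ 2 * t) (by fun_prop) 5
    convert (h.mul hsum).add hrest using 2 with t
    push_cast
    ring
  | succ n ih =>
    have hlead := (ih.mul hv1).mono (show n + 1 + 5 ≤ n + 5 + 1 by omega)
    have hfactor := ((pow_mul_continuous (q := fun t =>
      a ^ (n + 2) + (n + 2) * a ^ (n + 1) * b * t +
      ((n + 2) * a ^ (n + 1) * c + (n + 2) * (n + 1) / 2 * a ^ n * b ^ 2) * t ^ 2)
      (by fun_prop) (n + 2)).mul h).mono (show n + 1 + 5 ≤ n + 2 + 4 by omega)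
    have hrest := pow_mul_continuous (q := fun t => (n + 2) * a ^ (n + 1) * b * c +
      ((n + 2) * a ^ (n + 1) * c + (n + 2) * (n + 1) / 2 * a ^ n * b ^ 2) * (b + c * t))
      (by fun_prop) (n + 1 + 5)
    convert (hlead.add hfactor).add hrest using 2 with t
    push_cast
    ring

lemma comp_sub_expansion {k v : ℝ → ℝ} {a₈ a₉ : ℝ}
    (hk : VanishesToOrder 10 fun t => k t - (t ^ 7 + a₈ * t ^ 8 + a₉ * t ^ 9))
    (hv : ContDiff ℝ ∞ v) {a b c : ℝ}
    (h : VanishesToOrder 4 fun t => v t - (a * t + b * t ^ 2 + c * t ^ 3)) :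
    VanishesToOrder 10 fun t => k (v t) - (a ^ 7 * t ^ 7 + (7 * a ^ 6 * b + a₈ * a ^ 8) * t ^ 8 +
      (7 * a ^ 6 * c + 21 * a ^ 5 * b ^ 2 + 8 * a₈ * a ^ 7 * b + a₉ * a ^ 9) * t ^ 9) := by
  have hv1 : VanishesToOrder 1 v := by
    have h0 : v 0 = 0 := by simpa using h.apply_zero
    exact of_contDiff hv h0
  have h7 := pow_sub_expansion hv h 5
  have h8 := ((pow_sub_expansion hv h 6).mono (show 10 ≤ 6 + 5 by norm_num)).const_mul a₈
  have h9 := ((pow_sub_expansion hv h 7).mono (show 10 ≤ 7 + 5 by norm_num)).const_mul a₉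
  have hrest := pow_mul_continuous (q := fun t => a₈ * (8 * a ^ 7 * c + 28 * a ^ 6 * b ^ 2) +
    a₉ * (9 * a ^ 8 * b) + a₉ * (9 * a ^ 8 * c + 36 * a ^ 7 * b ^ 2) * t) (by fun_prop) 10
  convert (hk.comp hv1).add (((h7.add h8).add h9).add hrest) using 2 with t
  push_cast
  ring

end VanishesToOrder

section Unfoldings

/-- The unfolding `(x, y) ↦ (x, x y + k y)` of a function `k` of one variable; the normal forms
of the theorem are unfoldings of polynomials. -/
def unfolding (k : ℝ → ℝ) (p : ℝ × ℝ) : ℝ × ℝ :=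
  (p.1, p.1 * p.2 + k p.2)

variable {k l : ℝ → ℝ} {r : ℕ}

lemma contDiff_unfolding (hk : ContDiff ℝ ∞ k) : ContDiff ℝ ∞ (unfolding k) := by
  unfold unfolding
  fun_prop

lemma jetEquiv_unfolding_of_sub (hk : ContDiff ℝ ∞ k) (hl : ContDiff ℝ ∞ l)
    (h : VanishesToOrder (r + 1) fun t => k t - l t) :
    JetEquiv r (unfolding k) (unfolding l) := by
  refine jetEquiv_of_sub (contDiff_unfolding hk) (contDiff_unfolding hl) ?_
  have hcomp := h.comp VanishesToOrder.snd_id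
  simp only [zero_add, one_mul] at hcomp
  simpa only [unfolding, Prod.mk_sub_mk, sub_self, add_sub_add_left_eq_sub] using
    VanishesToOrder.zero.prodMk hcomp

lemma VanishesToOrder.exists_sub_add_fst_mul {N : ℝ × ℝ → ℝ} (hN : ContDiff ℝ ∞ N) {m : ℕ}
    (h : ∀ i j, i + j < m + 1 → i ≠ 0 → tcoeff N i j = 0) (n : ℕ) :
    ∃ R, ContDiff ℝ ∞ R ∧ VanishesToOrder m R ∧ VanishesToOrder (n + 1) fun p =>
      N p - (∑ j ∈ Finset.range (n + 1), tcoeff N 0 j * p.2 ^ j + p.1 * R p) := by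
  refine ⟨fun p => ∑ i ∈ Finset.range n, ∑ j ∈ Finset.range (n + 1),
    tcoeff N (i + 1) j * (p.1 ^ i * p.2 ^ j), by fun_prop, ?_, ?_⟩
  · refine .sum fun i _ => .sum fun j _ => ?_
    by_cases hij : i + j < m
    · simpa only [h (i + 1) j (by omega) i.succ_ne_zero, zero_mul] using zero
    · have hmon := (fst_id.pow i).mul (snd_id.pow j)
      exact (hmon.mono (by omega)).const_mul _
  · convert sub_taylor hN (n + 1) using 3 with p
    rw [Finset.sum_product, Finset.sum_range_succ' (n := n)
      (f := fun i => ∑ j ∈ Finset.range (n + 1), tcoeff N i j * (p.1 ^ i * p.2 ^ j)), add_comm]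
    simp only [Finset.mul_sum, pow_zero, one_mul]
    congr 1
    exact Finset.sum_congr rfl fun i _ => Finset.sum_congr rfl fun j _ => by ring

-- The shear `y ↦ y - R` absorbs the term `x R` into the term `x y`.
lemma jetEquiv_unfolding_of_sub_add_fst_mul {N R : ℝ × ℝ → ℝ} (hN : ContDiff ℝ ∞ N)
    (hR : ContDiff ℝ ∞ R) (hk : ContDiff ℝ ∞ k) {m : ℕ} (hm : 2 ≤ m) (hr : r + 1 ≤ m + m)
    (hN' : VanishesToOrder m (fderiv ℝ N)) (hRm : VanishesToOrder m R)
    (h : VanishesToOrder (r + 1) fun p => N p - (k p.2 + p.1 * R p)) :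
    JetEquiv r (fun p => (p.1, p.1 * p.2 + N p)) (unfolding k) := by
  have hshear : ContDiff ℝ ∞ fun p : ℝ × ℝ => (p.1, p.2 - R p) := by fun_prop
  have hshear_sub : VanishesToOrder m fun p : ℝ × ℝ => (p.1, p.2 - R p) - p := by
    convert VanishesToOrder.zero.prodMk (hRm.const_mul (-1)) using 2 with p
    ext <;> simp
  have hcoord : IsCoordChange fun p : ℝ × ℝ => (p.1, p.2 - R p) :=
    .of_sub_id hshear (hshear_sub.mono hm)
  refine (jetEquiv_iff (by fun_prop) (contDiff_unfolding hk)).2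
    ⟨_, id, hcoord, .of_equiv (.refl ℝ _), ?_⟩
  have hNshear := VanishesToOrder.comp_sub_comp (hN.differentiable (by simp)) hN'
    hcoord.vanishesToOrder_one (.of_clm (.id ℝ _)) hshear_sub
  convert VanishesToOrder.zero.prodMk ((hNshear.mono hr).add h) using 2 with p
  simp only [id, unfolding, Prod.mk_sub_mk, sub_self, ContinuousLinearMap.id_apply]
  congr 1
  ring

lemma VanishesToOrder.mul_geom_sum_sub (c : ℝ) (n : ℕ) :
    VanishesToOrder 4 fun t : ℝ => t * ∑ i ∈ Finset.range (n + 3), (c * t) ^ i -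
      (1 * t + c * t ^ 2 + c ^ 2 * t ^ 3) := by
  convert pow_mul_continuous
    (q := fun t => c ^ 3 * ∑ i ∈ Finset.range n, (c * t) ^ i) (by fun_prop) 4 using 2 with t
  rw [add_comm n, Finset.sum_range_add]
  simp only [Finset.sum_range_succ, Finset.sum_range_zero, pow_add (c * t) 3, ← Finset.mul_sum]
  ring

/-- The source coordinate change `(x, y) ↦ ((x - c k(v)) (1 - c y), v)`, in which `v` is the `r`-jet
of `y / (1 - c y)`. Together with the linear change `(X, Y) ↦ (X + c Y, Y)` of the target it
replaces `k` by `y ↦ (1 - c y) k(v)`. -/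
def tiltCoord (k : ℝ → ℝ) (c : ℝ) (r : ℕ) (p : ℝ × ℝ) : ℝ × ℝ :=
  ((p.1 - c * k (p.2 * ∑ i ∈ Finset.range (r + 1), (c * p.2) ^ i)) * (1 - c * p.2),
    p.2 * ∑ i ∈ Finset.range (r + 1), (c * p.2) ^ i)

lemma isCoordChange_tiltCoord (hk : ContDiff ℝ ∞ k) (hk2 : VanishesToOrder 2 k) (c : ℝ) (r : ℕ) :
    IsCoordChange (tiltCoord k c r) := by
  have hsmooth : ContDiff ℝ ∞ (tiltCoord k c r) := by
    unfold tiltCoord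
    fun_prop
  have hv : VanishesToOrder 1 fun p : ℝ × ℝ => p.2 * ∑ i ∈ Finset.range (r + 1), (c * p.2) ^ i :=
    .of_contDiff (by fun_prop) (by simp)
  have hv2 : VanishesToOrder 1 fun p : ℝ × ℝ => ∑ i ∈ Finset.range (r + 1), (c * p.2) ^ i - 1 :=
    .of_contDiff (by fun_prop) (by simp)
  have hkv : VanishesToOrder 2 fun p : ℝ × ℝ =>
      k (p.2 * ∑ i ∈ Finset.range (r + 1), (c * p.2) ^ i) * (-c * (1 - c * p.2)) :=
    (hk2.comp hv).mul_continuous (by fun_prop)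
  refine .of_sub_id hsmooth ?_
  convert (hkv.add ((VanishesToOrder.fst_id.mul .snd_id).const_mul (-c))).prodMk
    (VanishesToOrder.snd_id.mul hv2) using 2 with p
  ext
  · simp only [tiltCoord, Prod.fst_sub]
    ring
  · simp only [tiltCoord, Prod.snd_sub]
    ring

lemma jetEquiv_unfolding_tilt (hk : ContDiff ℝ ∞ k) (hk2 : VanishesToOrder 2 k) (c : ℝ) (r : ℕ) :
    JetEquiv r (unfolding k) (unfolding fun t =>
      (1 - c * t) * k (t * ∑ i ∈ Finset.range (r + 1), (c * t) ^ i)) := by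
  have hlin : IsCoordChange fun p => (1 * p.1 + c * p.2, 0 * p.1 + 1 * p.2) :=
    .linear (by norm_num)
  refine (jetEquiv_iff (contDiff_unfolding hk) (contDiff_unfolding (by fun_prop))).2
    ⟨tiltCoord k c r, _, isCoordChange_tiltCoord hk hk2 c r, hlin, ?_⟩
  have hgeom (y : ℝ) : (1 - c * y) * ∑ i ∈ Finset.range (r + 1), (c * y) ^ i =
      1 - (c * y) ^ (r + 1) :=
    mul_neg_geom_sum _ _
  have hrest : VanishesToOrder (r + 1) fun p : ℝ × ℝ => (c * p.2) ^ (r + 1) *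
      ((p.1 - c * k (p.2 * ∑ i ∈ Finset.range (r + 1), (c * p.2) ^ i)) * -p.2) := by
    simpa only [one_mul] using
      ((VanishesToOrder.snd_id.const_mul c).pow (r + 1)).mul_continuous (by fun_prop)
  convert (hrest.const_mul c).prodMk hrest using 2 with p
  simp only [tiltCoord, unfolding, Prod.mk_sub_mk]
  set w := p.1 - c * k (p.2 * ∑ i ∈ Finset.range (r + 1), (c * p.2) ^ i) with hw
  congr 1
  · linear_combination c * w * p.2 * hgeom p.2 + hw
  · linear_combination w * p.2 * hgeom p.2 + p.2 * hw

lemma jetEquiv_unfolding_scale (hk : ContDiff ℝ ∞ k) (r : ℕ) {a s : ℝ} (ha : a ≠ 0) (hs : s ≠ 0) :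
    JetEquiv r (unfolding k) (unfolding fun t => (a * s)⁻¹ * k (s * t)) := by
  have hsource : IsCoordChange fun p => (a * p.1 + 0 * p.2, 0 * p.1 + s * p.2) :=
    .linear (by simp [ha, hs])
  have htarget : IsCoordChange fun p => (a⁻¹ * p.1 + 0 * p.2, 0 * p.1 + (a * s)⁻¹ * p.2) :=
    .linear (by simp [ha, hs])
  refine (jetEquiv_iff (contDiff_unfolding hk) (contDiff_unfolding (by fun_prop))).2
    ⟨_, _, hsource, htarget, ?_⟩
  convert VanishesToOrder.zero using 2 with p
  simp only [unfolding, zero_mul, zero_add, add_zero, Prod.mk_sub_mk, Prod.mk_eq_zero]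
  constructor <;> field_simp <;> ring

-- The parameter `-a₈ / 6` of the tilt is the one that cancels the coefficient of `t ^ 8`.
lemma VanishesToOrder.tilt_expansion {a₈ a₉ : ℝ}
    (hk : VanishesToOrder 10 fun t => k t - (t ^ 7 + a₈ * t ^ 8 + a₉ * t ^ 9)) (n : ℕ) :
    VanishesToOrder 10 fun t =>
      (1 - -a₈ / 6 * t) * k (t * ∑ i ∈ Finset.range (n + 3), (-a₈ / 6 * t) ^ i) -
        (t ^ 7 + (a₉ - 7 / 12 * a₈ ^ 2) * t ^ 9) := by
  have hexp := (hk.comp_sub_expansion (by fun_prop) (mul_geom_sum_sub (-a₈ / 6) n)).mul_continuous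
    (H := fun t => 1 - -a₈ / 6 * t) (by fun_prop)
  have hrest := pow_mul_continuous (q := fun _ => (a₉ - 5 / 9 * a₈ ^ 2) * (a₈ / 6))
    continuous_const 10
  convert hexp.add hrest using 2 with t
  ring

lemma VanishesToOrder.scale_expansion {A s : ℝ} (hs : s ≠ 0)
    (hk : VanishesToOrder 10 fun t => k t - (t ^ 7 + A * t ^ 9)) :
    VanishesToOrder 10 fun t => (s ^ 6 * s)⁻¹ * k (s * t) - (t ^ 7 + s ^ 2 * A * t ^ 9) := by
  have hscale : VanishesToOrder 1 fun t : ℝ => s * t := .of_contDiff (by fun_prop) (by simp)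
  convert (hk.comp hscale).const_mul (s ^ 6 * s)⁻¹ using 2 with t
  field_simp

lemma VanishesToOrder.exists_sub_pow_ten_pow_eleven (hk : ContDiff ℝ ∞ k) {ε : ℝ}
    (h : VanishesToOrder 10 fun t => k t - (t ^ 7 + ε * t ^ 9)) :
    ∃ α β, VanishesToOrder 12 fun t =>
      k t - (t ^ 7 + ε * t ^ 9 + α * t ^ 10 + β * t ^ 11) := by
  obtain ⟨α, hα⟩ := h.exists_sub_const_mul_pow (by fun_prop)
  obtain ⟨β, hβ⟩ := hα.exists_sub_const_mul_pow (by fun_prop)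
  refine ⟨α, β, ?_⟩
  simpa only [sub_sub, add_assoc, Nat.reduceAdd] using hβ

lemma exists_jetEquiv_unfolding {a₈ a₉ s : ℝ} (hk : ContDiff ℝ ∞ k)
    (h : VanishesToOrder 10 fun t => k t - (t ^ 7 + a₈ * t ^ 8 + a₉ * t ^ 9)) (hs : s ≠ 0) :
    ∃ α β, JetEquiv 11 (unfolding k) (unfolding fun t =>
      t ^ 7 + s ^ 2 * (a₉ - 7 / 12 * a₈ ^ 2) * t ^ 9 + α * t ^ 10 + β * t ^ 11) := by
  have hk2 : VanishesToOrder 2 k := by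
    have hlead := VanishesToOrder.pow_mul_continuous (q := fun t => t ^ 5 + a₈ * t ^ 6 + a₉ * t ^ 7)
      (by fun_prop) 2
    convert (h.mono (by norm_num)).add hlead using 2 with t
    ring
  have htilt := jetEquiv_unfolding_tilt hk hk2 (-a₈ / 6) 11
  have hscale := jetEquiv_unfolding_scale (k := fun t =>
    (1 - -a₈ / 6 * t) * k (t * ∑ i ∈ Finset.range 12, (-a₈ / 6 * t) ^ i)) (by fun_prop) 11
    (pow_ne_zero 6 hs) hs
  obtain ⟨α, β, hαβ⟩ := VanishesToOrder.exists_sub_pow_ten_pow_eleven (by fun_prop)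
    ((h.tilt_expansion 9).scale_expansion hs)
  have htrunc := jetEquiv_unfolding_of_sub (by fun_prop) (by fun_prop) hαβ
  refine ⟨α, β, .trans ?_ ?_ ?_ (htilt.trans ?_ ?_ ?_ hscale) htrunc⟩ <;>
    exact contDiff_unfolding (by fun_prop)

section Axis

variable {N : ℝ × ℝ → ℝ}

lemma exists_sub_axis_add_fst_mul (hN : ContDiff ℝ ∞ N)
    (h : ∀ i j, i + j < 8 → tcoeff N i j = if (i, j) = (0, 7) then 1 else 0) :
    ∃ (k : ℝ → ℝ) (R : ℝ × ℝ → ℝ), ContDiff ℝ ∞ k ∧ ContDiff ℝ ∞ R ∧ VanishesToOrder 6 R ∧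
      VanishesToOrder 10 (fun t => k t - (t ^ 7 + tcoeff N 0 8 * t ^ 8 + tcoeff N 0 9 * t ^ 9)) ∧
      VanishesToOrder 12 fun p => N p - (k p.2 + p.1 * R p) := by
  obtain ⟨R, hR, hR6, hNR⟩ := VanishesToOrder.exists_sub_add_fst_mul hN (m := 6)
    (fun i j hij hi => by rw [h i j (by omega), if_neg (by simp [hi])]) 11
  refine ⟨fun t => ∑ j ∈ Finset.range 12, tcoeff N 0 j * t ^ j, R, by fun_prop, hR, hR6, ?_, hNR⟩
  have hlow (j : ℕ) (hj : j < 7) : tcoeff N 0 j = 0 := by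
    rw [h 0 j (by omega), if_neg (by simp [hj.ne])]
  have h7 : tcoeff N 0 7 = 1 := by simp [h 0 7]
  convert VanishesToOrder.pow_mul_continuous
    (q := fun t => tcoeff N 0 10 + tcoeff N 0 11 * t) (by fun_prop) 10 using 2 with t
  simp only [Finset.sum_range_succ, Finset.sum_range_zero, h7, hlow 0, hlow 1, hlow 2, hlow 3,
    hlow 4, hlow 5, hlow 6, Nat.reduceLT]
  ring

lemma exists_jetEquiv_of_tcoeff (hN : ContDiff ℝ ∞ N)
    (h : ∀ i j, i + j < 8 → tcoeff N i j = if (i, j) = (0, 7) then 1 else 0) {s : ℝ} (hs : s ≠ 0) :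
    ∃ α β, JetEquiv 11 (fun p => (p.1, p.1 * p.2 + N p)) (unfolding fun t => t ^ 7 +
      s ^ 2 * (tcoeff N 0 9 - 7 / 12 * tcoeff N 0 8 ^ 2) * t ^ 9 + α * t ^ 10 + β * t ^ 11) := by
  obtain ⟨k, R, hk, hR, hR6, hk10, hNR⟩ := exists_sub_axis_add_fst_mul hN h
  have hN6 : VanishesToOrder 6 (fderiv ℝ N) :=
    .fderiv_of_tcoeff hN fun i j hij => by
      rw [h i j (by omega), if_neg]
      rintro ⟨⟩
      norm_num at hij
  have hshear := jetEquiv_unfolding_of_sub_add_fst_mul (r := 11) hN hR hk (m := 6) (by norm_num)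
    (by norm_num) hN6 hR6 hNR
  obtain ⟨α, β, hunf⟩ := exists_jetEquiv_unfolding hk hk10 hs
  exact ⟨α, β, hshear.trans (by fun_prop) (contDiff_unfolding hk)
    (contDiff_unfolding (by fun_prop)) hunf⟩

lemma VanishesToOrder.comp_sub_axis {R : ℝ × ℝ → ℝ} (hR : VanishesToOrder 6 R)
    (h : VanishesToOrder 12 fun p => N p - (k p.2 + p.1 * R p)) {φ : ℝ → ℝ × ℝ}
    (hφ : VanishesToOrder 1 φ) (hφ6 : VanishesToOrder 6 fun t => (φ t).1) :
    VanishesToOrder 12 fun t => N (φ t) - k (φ t).2 := by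
  convert (h.comp hφ).add (hφ6.mul (hR.comp hφ)) using 2 with t
  ring

end Axis

open Polynomial in
lemma VanishesToOrder.eq_zero_of_mul_pow_add {c₆ c₇ c₈ c₉ : ℝ}
    (h : VanishesToOrder 10 fun t => c₆ * t ^ 6 + c₇ * t ^ 7 + c₈ * t ^ 8 + c₉ * t ^ 9) :
    c₇ = 0 ∧ c₈ = 0 ∧ c₉ = 0 := by
  have hP : VanishesToOrder 10 fun t =>
      (C c₆ * X ^ 6 + C c₇ * X ^ 7 + C c₈ * X ^ 8 + C c₉ * X ^ 9 : ℝ[X]).eval t := by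
    simpa using h
  refine ⟨?_, ?_, ?_⟩
  · simpa [coeff_X_pow] using hP.coeff_eq_zero (k := 7) (by norm_num)
  · simpa [coeff_X_pow] using hP.coeff_eq_zero (k := 8) (by norm_num)
  · simpa [coeff_X_pow] using hP.coeff_eq_zero (k := 9) (by norm_num)

lemma coeff_eq_of_curve {u v : ℝ → ℝ} {a₈ a₉ a b c A B C D E G : ℝ}
    (hk : VanishesToOrder 10 fun t => k t - (t ^ 7 + a₈ * t ^ 8 + a₉ * t ^ 9))
    (hv : ContDiff ℝ ∞ v)
    (hv4 : VanishesToOrder 4 fun t => v t - (a * t + b * t ^ 2 + c * t ^ 3))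
    (hu : VanishesToOrder 10 fun t => u t - (A * t ^ 6 + B * t ^ 7 + C * t ^ 9))
    (h : VanishesToOrder 10 fun t => u t * v t + k (v t) - (D * t ^ 6 + E * t ^ 7 + G * t ^ 9)) :
    A * a + a ^ 7 = E ∧ A * b + B * a + (7 * a ^ 6 * b + a₈ * a ^ 8) = 0 ∧
      A * c + B * b +
        (7 * a ^ 6 * c + 21 * a ^ 5 * b ^ 2 + 8 * a₈ * a ^ 7 * b + a₉ * a ^ 9) = G := by
  have hkv := hk.comp_sub_expansion hv hv4
  have huv := (hu.mul_continuous hv.continuous).add ((VanishesToOrder.pow_mul_continuous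
    (q := fun t => A + B * t + C * t ^ 3) (by fun_prop) 6).mul hv4)
  have hrest := VanishesToOrder.pow_mul_continuous
    (q := fun t => B * c + C * a + C * b * t + C * c * t ^ 2) (by fun_prop) 10
  obtain ⟨h7, h8, h9⟩ := VanishesToOrder.eq_zero_of_mul_pow_add (c₆ := -D) (c₇ := A * a + a ^ 7 - E)
    (c₈ := A * b + B * a + (7 * a ^ 6 * b + a₈ * a ^ 8)) (c₉ := A * c + B * b +
      (7 * a ^ 6 * c + 21 * a ^ 5 * b ^ 2 + 8 * a₈ * a ^ 7 * b + a₉ * a ^ 9) - G) (by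
    convert ((h.sub hkv).sub huv).sub hrest using 2 with t
    ring)
  exact ⟨sub_eq_zero.1 h7, h8, sub_eq_zero.1 h9⟩

lemma eq_sq_mul_of_coeff_eq {a₈ a₉ a b c α₁ α₂ β₂ ε : ℝ} (ha : a ≠ 0)
    (h : ∀ s : ℝ, s * α₁ * a + a ^ 7 = (s + 1) * β₂ ∧
      s * α₁ * b + (s + 1) * α₂ * a + (7 * a ^ 6 * b + a₈ * a ^ 8) = 0 ∧
      s * α₁ * c + (s + 1) * α₂ * b +
        (7 * a ^ 6 * c + 21 * a ^ 5 * b ^ 2 + 8 * a₈ * a ^ 7 * b + a₉ * a ^ 9) = ε * β₂) :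
    ε = a ^ 2 * (a₉ - 7 / 12 * a₈ ^ 2) := by
  obtain ⟨h7, h8, h9⟩ := h 0
  obtain ⟨h7', h8', h9'⟩ := h (-1)
  have hα₁ : α₁ = a ^ 6 := mul_right_cancel₀ ha (by linear_combination -h7')
  have hβ₂ : β₂ = a ^ 7 := by linear_combination -h7
  subst hα₁ hβ₂
  have hb : b = -a₈ / 6 * a ^ 2 :=
    mul_left_cancel₀ (pow_ne_zero 6 ha) (by linear_combination h8' / 6)
  have hα₂ : α₂ = a₈ / 6 * a ^ 7 :=
    mul_right_cancel₀ ha (by rw [hb] at h8; linear_combination h8)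
  subst hb hα₂
  have hc : c = a₈ ^ 2 / 36 * a ^ 3 :=
    mul_left_cancel₀ (pow_ne_zero 6 ha) (by linear_combination h9 - h9')
  subst hc
  exact mul_left_cancel₀ (pow_ne_zero 7 ha) (by linear_combination -h9)

namespace IsCoordChange

variable {φ : ℝ × ℝ → ℝ × ℝ}

lemma exists_snd_expansion (hφ : IsCoordChange φ) :
    ∃ a b c : ℝ, ∀ s : ℝ, VanishesToOrder 4 fun t =>
      (φ (s * t ^ 6, t)).2 - (a * t + b * t ^ 2 + c * t ^ 3) := by
  have hφs := hφ.contDiff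
  have haxis : VanishesToOrder 1 fun t : ℝ => (φ (0, t)).2 :=
    .of_contDiff (by fun_prop) (by simp [Prod.mk_zero_zero, hφ.apply_zero])
  obtain ⟨a, ha⟩ := haxis.exists_sub_const_mul_pow (by fun_prop)
  obtain ⟨b, hb⟩ := ha.exists_sub_const_mul_pow (by fun_prop)
  obtain ⟨c, hc⟩ := hb.exists_sub_const_mul_pow (by fun_prop)
  refine ⟨a, b, c, fun s => ?_⟩
  have hcurve : VanishesToOrder 6 fun t : ℝ => (s * t ^ 6, t) - (0, t) := by
    simpa [mul_comm] using
      (VanishesToOrder.pow_mul_continuous (q := fun _ => s) continuous_const 6).prodMk .zero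
  have hφcurve := VanishesToOrder.comp_sub_comp_of_contDiff hφs (by fun_prop) hcurve
  convert (hφcurve.snd.mono (show 4 ≤ 5 + 1 by norm_num)).add hc using 2 with t
  rw [Prod.snd_sub]
  ring

lemma ne_zero_of_snd_expansion (hφ : IsCoordChange φ)
    (h1 : VanishesToOrder 2 fun t : ℝ => (φ (0, t)).1) {a : ℝ}
    (h2 : VanishesToOrder 2 fun t : ℝ => (φ (0, t)).2 - a * t) : a ≠ 0 := by
  rintro rfl
  have haxis : VanishesToOrder 1 fun t : ℝ => ((0 : ℝ), t) := .of_contDiff (by fun_prop) (by simp)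
  have hφaxis : VanishesToOrder 2 fun t : ℝ => φ (0, t) :=
    h1.prodMk (by simpa only [zero_mul, sub_zero] using h2)
  have hid : VanishesToOrder 2 fun t : ℝ => t :=
    VanishesToOrder.snd ((hφ.isBigO_rev.comp_tendsto haxis.tendsto_zero).trans hφaxis)
  have hX : VanishesToOrder 2 fun t : ℝ => (Polynomial.X : Polynomial ℝ).eval t := by
    simpa only [Polynomial.eval_X] using hid
  simpa using hX.coeff_eq_zero (k := 1) (by norm_num)

end IsCoordChange

lemma exists_sub_unfolding_curve {f : ℝ × ℝ → ℝ × ℝ} (hf : ContDiff ℝ ∞ f) (hf0 : f 0 = 0)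
    (hl : ContDiff ℝ ∞ l) (hl6 : VanishesToOrder 6 l) (h : JetEquiv 11 f (unfolding l)) :
    ∃ (φ : ℝ × ℝ → ℝ × ℝ) (L : (ℝ × ℝ) ≃L[ℝ] ℝ × ℝ), IsCoordChange φ ∧ ∀ s : ℝ,
      VanishesToOrder 12 fun t => f (φ (s * t ^ 6, t)) - L (unfolding l (s * t ^ 6, t)) := by
  obtain ⟨φ, ψ, hφ, hψ, hjet⟩ := (jetEquiv_iff hf (contDiff_unfolding hl)).1 h
  obtain ⟨L, hL⟩ := hψ.exists_equiv_sub_comp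
  refine ⟨φ, L, hφ, fun s => ?_⟩
  have hφs := hφ.contDiff
  have hcurve : VanishesToOrder 1 fun t : ℝ => (s * t ^ 6, t) :=
    .of_contDiff (by fun_prop) (by simp)
  have hw : VanishesToOrder 1 fun t : ℝ => f (φ (s * t ^ 6, t)) :=
    .of_contDiff (by fun_prop) (by simp [Prod.mk_zero_zero, hφ.apply_zero, hf0])
  have hsix := (VanishesToOrder.pow_mul_continuous (q := fun _ => s) continuous_const 6)
  have hv : VanishesToOrder 6 fun t : ℝ => unfolding l (s * t ^ 6, t) := by
    simpa only [unfolding, mul_comm s] using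
      hsix.prodMk ((hsix.mul_continuous continuous_id').add hl6)
  exact hL hw hv (by norm_num) (by norm_num) (hjet.comp hcurve)

lemma exists_expansion_unfolding_curve {f : ℝ × ℝ → ℝ × ℝ} {ε : ℝ} (hf : ContDiff ℝ ∞ f)
    (hf0 : f 0 = 0) (hl : ContDiff ℝ ∞ l)
    (hl10 : VanishesToOrder 10 fun t => l t - (t ^ 7 + ε * t ^ 9))
    (h : JetEquiv 11 f (unfolding l)) :
    ∃ (φ : ℝ × ℝ → ℝ × ℝ) (v w : ℝ × ℝ), IsCoordChange φ ∧ ∀ s : ℝ, VanishesToOrder 10 fun t =>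
      f (φ (s * t ^ 6, t)) - ((s * t ^ 6) • v + ((s + 1) * t ^ 7 + ε * t ^ 9) • w) := by
  have hl6 : VanishesToOrder 6 l := by
    convert (hl10.mono (by norm_num)).add (VanishesToOrder.pow_mul_continuous
      (q := fun t => t + ε * t ^ 3) (by fun_prop) 6) using 2 with t
    ring
  obtain ⟨φ, L, hφ, hL⟩ := exists_sub_unfolding_curve hf hf0 hl hl6 h
  refine ⟨φ, L (1, 0), L (0, 1), hφ, fun s => ?_⟩
  have htail : VanishesToOrder 10 fun t => L (0, l t - (t ^ 7 + ε * t ^ 9)) :=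
    (VanishesToOrder.zero.prodMk hl10).clm_apply (L : ℝ × ℝ →L[ℝ] ℝ × ℝ)
  convert ((hL s).mono (show 10 ≤ 12 by norm_num)).add htail using 2 with t
  rw [← map_smul, ← map_smul, ← map_add, sub_add, ← map_sub, unfolding]
  congr 2
  simp only [Prod.smul_mk, smul_eq_mul, mul_one, mul_zero, Prod.mk_add_mk, add_zero, zero_add,
    Prod.mk_sub_mk, sub_zero]
  congr 1
  ring

lemma exists_eq_sq_mul_of_jetEquiv {N : ℝ × ℝ → ℝ} {ε : ℝ} (hN : ContDiff ℝ ∞ N)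
    (h : ∀ i j, i + j < 8 → tcoeff N i j = if (i, j) = (0, 7) then 1 else 0)
    (hl : ContDiff ℝ ∞ l) (hl10 : VanishesToOrder 10 fun t => l t - (t ^ 7 + ε * t ^ 9))
    (hequiv : JetEquiv 11 (fun p => (p.1, p.1 * p.2 + N p)) (unfolding l)) :
    ∃ s ≠ 0, ε = s ^ 2 * (tcoeff N 0 9 - 7 / 12 * tcoeff N 0 8 ^ 2) := by
  obtain ⟨k, R, -, -, hR6, hk10, hNR⟩ := exists_sub_axis_add_fst_mul hN h
  have hN0 : N 0 = 0 := by simpa [tcoeff] using h 0 0 (by norm_num)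
  obtain ⟨φ, v, w, hφ, hφ10⟩ :=
    exists_expansion_unfolding_curve (by fun_prop) (by simp [hN0]) hl hl10 hequiv
  have hφs := hφ.contDiff
  have hfst (s : ℝ) : VanishesToOrder 10 fun t => (φ (s * t ^ 6, t)).1 -
      (s * v.1 * t ^ 6 + (s + 1) * w.1 * t ^ 7 + ε * w.1 * t ^ 9) := by
    convert (hφ10 s).fst using 2 with t
    simp only [Prod.fst_sub, Prod.fst_add, Prod.smul_fst, smul_eq_mul]
    ring
  have hfst6 (s : ℝ) : VanishesToOrder 6 fun t => (φ (s * t ^ 6, t)).1 := by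
    convert ((hfst s).mono (show 6 ≤ 10 by norm_num)).add (VanishesToOrder.pow_mul_continuous
      (q := fun t => s * v.1 + (s + 1) * w.1 * t + ε * w.1 * t ^ 3) (by fun_prop) 6) using 2 with t
    ring
  obtain ⟨a, b, c, hsnd⟩ := hφ.exists_snd_expansion
  have ha : a ≠ 0 := by
    refine hφ.ne_zero_of_snd_expansion
      (by simpa only [zero_mul] using (hfst6 0).mono (by norm_num)) ?_
    convert ((hsnd 0).mono (show 2 ≤ 4 by norm_num)).add (VanishesToOrder.pow_mul_continuous
      (q := fun t => b + c * t) (by fun_prop) 2) using 2 with t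
    rw [zero_mul]
    ring
  refine ⟨a, ha, eq_sq_mul_of_coeff_eq (b := b) (c := c) (α₁ := v.1) (α₂ := w.1) (β₂ := w.2) ha
    fun s => ?_⟩
  have hφ1 : VanishesToOrder 1 fun t : ℝ => φ (s * t ^ 6, t) :=
    .of_contDiff (by fun_prop) (by simp [Prod.mk_zero_zero, hφ.apply_zero])
  refine coeff_eq_of_curve hk10 (by fun_prop) (hsnd s) (hfst s) (D := s * v.2) ?_
  convert (hφ10 s).snd.sub ((hR6.comp_sub_axis hNR hφ1 (hfst6 s)).mono
    (show 10 ≤ 12 by norm_num)) using 2 with t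
  simp only [Prod.snd_sub, Prod.snd_add, Prod.smul_snd, smul_eq_mul]
  ring

theorem exists_jetEquiv_iff_exists_eq_sq_mul {N : ℝ × ℝ → ℝ} (hN : ContDiff ℝ ∞ N)
    (h : ∀ i j, i + j < 8 → tcoeff N i j = if (i, j) = (0, 7) then 1 else 0) (ε : ℝ) :
    (∃ α β, JetEquiv 11 (fun p => (p.1, p.1 * p.2 + N p))
        (unfolding fun t => t ^ 7 + ε * t ^ 9 + α * t ^ 10 + β * t ^ 11)) ↔
      ∃ s ≠ 0, ε = s ^ 2 * (tcoeff N 0 9 - 7 / 12 * tcoeff N 0 8 ^ 2) := by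
  constructor
  · rintro ⟨α, β, hequiv⟩
    refine exists_eq_sq_mul_of_jetEquiv hN h (by fun_prop) ?_ hequiv
    convert VanishesToOrder.pow_mul_continuous (q := fun t => α + β * t) (by fun_prop) 10
      using 2 with t
    ring
  · rintro ⟨s, hs, rfl⟩
    exact exists_jetEquiv_of_tcoeff hN h hs

end Unfoldings

lemma ne_zero_iff_exists_sign_eq_sq_mul {A : ℝ} :
    A ≠ 0 ↔ ∃ ε : ℝ, (ε = 1 ∨ ε = -1) ∧ ∃ s : ℝ, s ≠ 0 ∧ ε = s ^ 2 * A := by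
  constructor
  · intro hA
    refine ⟨SignType.sign A, ?_, (√|A|)⁻¹, by positivity, ?_⟩
    · rcases hA.lt_or_gt with h | h <;> simp [h]
    · rw [inv_pow, Real.sq_sqrt (abs_nonneg A), eq_inv_mul_iff_mul_eq₀ (abs_ne_zero.2 hA),
        abs_mul_sign]
  · rintro ⟨ε, hε, s, -, rfl⟩ rfl
    norm_num at hε

lemma tcoeff_sub_fst_mul_snd {g : ℝ × ℝ → ℝ} (hg : ContDiff ℝ ∞ g) (i j : ℕ) :
    tcoeff (fun p => g p - p.1 * p.2) i j = tcoeff g i j - if (i, j) = (1, 1) then 1 else 0 := by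
  have hmul := tcoeff_sum_monomial {(1, 1)} (fun _ => 1) i j
  simp only [Finset.sum_singleton, pow_one, one_mul, Finset.mem_singleton] at hmul
  rw [tcoeff_sub hg (by fun_prop), hmul]

lemma HasForm.exists_add_fst_mul_snd {f : ℝ × ℝ → ℝ × ℝ} {g : ℝ × ℝ → ℝ}
    (h : HasForm f g 8 fun i j => if (i, j) = (1, 1) ∨ (i, j) = (0, 7) then 1 else 0) :
    ∃ N : ℝ × ℝ → ℝ, ContDiff ℝ ∞ N ∧ f = (fun p => (p.1, p.1 * p.2 + N p)) ∧
      (∀ i j, i + j < 8 → tcoeff N i j = if (i, j) = (0, 7) then 1 else 0) ∧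
      ∀ j, tcoeff N 0 j = tcoeff g 0 j := by
  obtain ⟨hg, hfg, hcoeff⟩ := h
  refine ⟨fun p => g p - p.1 * p.2, by fun_prop, ?_, fun i j hij => ?_, fun j => ?_⟩
  · funext p
    rw [hfg, add_sub_cancel]
  · rw [tcoeff_sub_fst_mul_snd hg, hcoeff i j hij]
    split_ifs <;> simp_all
  · simp [tcoeff_sub_fst_mul_snd hg]

theorem stmt7 (f : ℝ × ℝ → ℝ × ℝ) (g : ℝ × ℝ → ℝ) (hf0 : f 0 = 0)
    (hform : HasForm f g 8 (fun i j => if (i, j) = (1, 1) ∨ (i, j) = (0, 7) then 1 else 0)) :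
    tcoeff g 0 9 - 7 / 12 * tcoeff g 0 8 ^ 2 ≠ 0 ↔
      ∃ ε : ℝ, (ε = 1 ∨ ε = -1) ∧ ∃ α β : ℝ,
        JetEquiv 11 f (fun p =>
          (p.1, p.1 * p.2 + p.2 ^ 7 + ε * p.2 ^ 9 + α * p.2 ^ 10 + β * p.2 ^ 11)) := by
  obtain ⟨N, hN, rfl, hlow, haxis⟩ := hform.exists_add_fst_mul_snd
  have hnormal (ε α β : ℝ) : (fun p : ℝ × ℝ =>
      (p.1, p.1 * p.2 + p.2 ^ 7 + ε * p.2 ^ 9 + α * p.2 ^ 10 + β * p.2 ^ 11)) =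
      unfolding fun t => t ^ 7 + ε * t ^ 9 + α * t ^ 10 + β * t ^ 11 := by
    funext p
    simp only [unfolding, add_assoc]
  simp only [hnormal, exists_jetEquiv_iff_exists_eq_sq_mul hN hlow, haxis]
  exact ne_zero_iff_exists_sign_eq_sq_mul
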